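/- Let f : 𝒜 → 𝒜 satisfy f(A + B·P) ≡ f(A) (mod P) for every A, B ∈ 𝒜 and every irreducible P ∈ 𝒫. Assume there exist U ∈ 𝒜 with U′ ≠ 0 (i.e. U is not the p-th power of an element of F̄[t], where F̄ is an algebraic closure of 𝔽) and positive integers C₅ and C₆ such that deg(f(Uⁿ)) ≤ C₅·n + C₆ for every n ∈ ℕ₀. Then f is a polynomial map. -/

import Mathlib

open Polynomial

/-!
Fix `U` with `U' ≠ 0`. A map `E` that respects congruences modulo irreducibles also respects them
modulo squarefree polynomials, so the radical of `Uⁿ - A` divides `E(Uⁿ) - E(A)`. By the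
Mason–Stothers argument this radical has degree at least `n deg U - O(1)`, unless `U A' = n U' A`,
which fails for one of `A`, `A + P`, `A + t P` whenever `P ≠ 0`. This makes zeros of `E` spread:

* if `E` vanishes at `N` points `A` with `U A' ≠ n U' A`, then either `E(Uⁿ) = 0` or
  `deg E(Uⁿ) ≥ N n deg U - O(1)`;
* if `E(Uⁿ) = 0` for infinitely many `n`, then every irreducible `P` divides `E(A)`, so `E(A) = 0`.

If `deg f(Uⁿ) ≤ c n + d`, linear algebra provides `(R, S) ≠ (0, 0)` of degree less than `c + 2` for
which `E = R + S f` vanishes at `2c + 3` powers `U^(qk)`, with `q` the characteristic exponent. By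
the first bullet, `E(Uⁿ)` would be too large for infinitely many `n` unless it vanishes. Then `S`
divides `R` up to a constant `D ∈ F[t]`, so `D f` agrees with a polynomial `g` at infinitely many
`Uⁿ`, and the second bullet applied to `D f - g` gives `D f = g`.
-/

open Filter UniqueFactorizationMonoid

section CongruencePreserving

variable {R : Type*} [CommRing R]

/-- A self-map of a ring *preserves prime congruences* if `A ≡ B (mod P)` implies
`f A ≡ f B (mod P)` for every irreducible `P`. -/
def PreservesPrimeCongruences (f : R → R) : Prop :=
  ∀ ⦃P⦄, Irreducible P → ∀ ⦃A B⦄, P ∣ A - B → P ∣ f A - f B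

theorem preservesPrimeCongruences_of_dvd_add_mul {f : R → R}
    (hf : ∀ A B P : R, Irreducible P → P ∣ f (A + B * P) - f A) :
    PreservesPrimeCongruences f := by
  rintro P hP A B ⟨Q, hQ⟩
  obtain rfl : A = B + Q * P := by linear_combination hQ
  exact hf B Q P hP

theorem PreservesPrimeCongruences.eval_add_eval_mul {f : R → R}
    (hf : PreservesPrimeCongruences f) (p s : R[X]) :
    PreservesPrimeCongruences fun A => p.eval A + s.eval A * f A := by
  intro P hP A B hAB
  have hp : P ∣ p.eval A - p.eval B := hAB.trans (sub_dvd_eval_sub A B p)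
  have hs : P ∣ s.eval A - s.eval B := hAB.trans (sub_dvd_eval_sub A B s)
  have hsum := (hp.add (hs.mul_right (f A))).add ((hf hP hAB).mul_left (s.eval B))
  convert hsum using 1
  ring

theorem radical_dvd_of_forall_irreducible_dvd [IsDomain R] [NormalizationMonoid R]
    [UniqueFactorizationMonoid R] {a b : R} (h : ∀ P, Irreducible P → P ∣ a → P ∣ b) :
    radical a ∣ b :=
  Finset.prod_dvd_of_isRelPrime pairwise_primeFactors_isRelPrime fun P hP =>
    have hPa := mem_primeFactors.mp hP
    h P (irreducible_of_normalized_factor P hPa) (dvd_of_mem_normalizedFactors hPa)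

theorem PreservesPrimeCongruences.radical_sub_dvd_sub [IsDomain R] [NormalizationMonoid R]
    [UniqueFactorizationMonoid R] {f : R → R} (hf : PreservesPrimeCongruences f) (A B : R) :
    radical (A - B) ∣ f A - f B :=
  radical_dvd_of_forall_irreducible_dvd fun _ hP hAB => hf hP hAB

theorem exists_forall_prod_dvd_mul [IsDomain R] (s : Finset R) :
    ∃ c ≠ 0, ∀ (V E : R) (b : R → R), (∀ a ∈ s, b a ∣ V - a) → (∀ a ∈ s, b a ∣ E) →
      ∏ a ∈ s, b a ∣ c * E := by
  classical
  induction s using Finset.induction_on with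
  | empty => exact ⟨1, one_ne_zero, by simp⟩
  | insert a₀ s ha₀ ih =>
    obtain ⟨c, hc, hdvd⟩ := ih
    refine ⟨c * ∏ a ∈ s, (a₀ - a), mul_ne_zero hc (Finset.prod_ne_zero_iff.mpr fun a ha =>
      sub_ne_zero.mpr (ne_of_mem_of_not_mem ha ha₀).symm), fun V E b hV hE => ?_⟩
    rw [Finset.forall_mem_insert] at hV hE
    obtain ⟨hV₀, hV⟩ := hV
    obtain ⟨hE₀, hE⟩ := hE
    have hprodV : ∏ a ∈ s, b a ∣ ∏ a ∈ s, (V - a) := Finset.prod_dvd_prod_of_dvd _ _ hV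
    have hdiff : b a₀ ∣ ∏ a ∈ s, (V - a) - ∏ a ∈ s, (a₀ - a) := by
      have := sub_dvd_eval_sub V a₀ (∏ a ∈ s, (X - C a))
      simp only [eval_prod, eval_sub, eval_X, eval_C] at this
      exact hV₀.trans this
    rw [Finset.prod_insert ha₀]
    have hsub := dvd_sub ((mul_dvd_mul hE₀ hprodV).mul_left c)
      (mul_dvd_mul hdiff (hdvd V E b hV hE))
    convert hsub using 1
    ring

end CongruencePreserving

section ReducedWronskian

variable {R : Type*} [CommRing R]

/-- The Wronskian `Uⁿ A' - (Uⁿ)' A` of `Uⁿ` and `A`, divided by its trivial factor `Uⁿ⁻¹`.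
It is the quantity that bounds the repeated factors of `Uⁿ - A`. -/
noncomputable def reducedWronskian (U : R[X]) (n : ℕ) : R[X] →ₗ[R] R[X] :=
  LinearMap.mulLeft R U ∘ₗ derivative - LinearMap.mulLeft R ((n : R[X]) * derivative U)

theorem reducedWronskian_apply (U : R[X]) (n : ℕ) (A : R[X]) :
    reducedWronskian U n A = U * derivative A - n * derivative U * A :=
  rfl

theorem reducedWronskian_mul (U : R[X]) (n : ℕ) (A B : R[X]) :
    reducedWronskian U n (A * B) = A * reducedWronskian U n B + U * derivative A * B := by
  simp only [reducedWronskian_apply, derivative_mul]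
  ring

theorem reducedWronskian_pow (U : R[X]) (n m : ℕ) :
    reducedWronskian U n (U ^ m) = (m - n) * derivative U * U ^ m := by
  rw [reducedWronskian_apply, derivative_pow]
  cases m with
  | zero => simp
  | succ m =>
    simp only [map_natCast, Nat.add_sub_cancel]
    ring

theorem reducedWronskian_pow_ne_zero [IsDomain R] {U : R[X]} (hU : derivative U ≠ 0) {m n : ℕ}
    (hmn : (m : R) ≠ n) : reducedWronskian U n (U ^ m) ≠ 0 := by
  have hU₀ : U ≠ 0 := by
    rintro rfl
    exact hU derivative_zero
  have hcast : (m : R[X]) - n ≠ 0 := by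
    simpa only [sub_ne_zero, C_eq_natCast] using C_injective.ne hmn
  rw [reducedWronskian_pow]
  exact mul_ne_zero (mul_ne_zero hcast hU) (pow_ne_zero m hU₀)

theorem natDegree_reducedWronskian_le (U : R[X]) (n : ℕ) (A : R[X]) :
    (reducedWronskian U n A).natDegree ≤ U.natDegree + A.natDegree := by
  have hU := U.natDegree_derivative_le.trans (Nat.sub_le _ 1)
  have hA := A.natDegree_derivative_le.trans (Nat.sub_le _ 1)
  have hnUA : ((n : R[X]) * derivative U * A).natDegree ≤ U.natDegree + A.natDegree := by
    rw [mul_assoc, ← nsmul_eq_mul]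
    exact (natDegree_smul_le n _).trans (natDegree_mul_le_of_le hU le_rfl)
  rw [reducedWronskian_apply]
  exact (natDegree_sub_le_of_le (natDegree_mul_le_of_le le_rfl hA) hnUA).trans_eq (max_self _)

theorem exists_mem_reducedWronskian_ne_zero [IsDomain R] {U P : R[X]} (hU : U ≠ 0) (hP : P ≠ 0)
    (n : ℕ) (A : R[X]) :
    ∃ B ∈ ({A, A + P, A + X * P} : Set R[X]), reducedWronskian U n B ≠ 0 := by
  by_contra! h
  have hA : reducedWronskian U n A = 0 := h A (by simp)
  have hAP : reducedWronskian U n (A + P) = 0 := h _ (by simp)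
  have hAXP : reducedWronskian U n (A + X * P) = 0 := h _ (by simp)
  rw [map_add, hA, zero_add] at hAP hAXP
  rw [reducedWronskian_mul, hAP, derivative_X, mul_zero, zero_add, mul_one] at hAXP
  exact mul_ne_zero hU hP hAXP

end ReducedWronskian

section Radical

variable {F : Type*} [Field F]

theorem natDegree_pow_le_natDegree_radical_sub [DecidableEq F] {U A : F[X]} {n : ℕ}
    (hA : reducedWronskian U n A ≠ 0) :
    n * U.natDegree ≤ (radical (U ^ n - A)).natDegree + (U.natDegree + 2 * A.natDegree) := by
  set G := U ^ n - A with hG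
  have hWG : reducedWronskian U n G = -reducedWronskian U n A := by
    rw [hG, map_sub, reducedWronskian_pow, sub_self, zero_mul, zero_mul, zero_sub]
  have hG₀ : G ≠ 0 := fun h => hA (by rw [← neg_eq_zero, ← hWG, h, map_zero])
  have hdvd : EuclideanDomain.divRadical G ∣ reducedWronskian U n A := by
    rw [← dvd_neg, ← hWG, reducedWronskian_apply]
    exact dvd_sub ((divRadical_dvd_derivative G).mul_left _)
      ((EuclideanDomain.divRadical_dvd_self G).mul_left _)
  have hdivRadical : (EuclideanDomain.divRadical G).natDegree ≤ U.natDegree + A.natDegree :=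
    (natDegree_le_of_dvd hdvd hA).trans (natDegree_reducedWronskian_le U n A)
  have hradical :
      G.natDegree = (radical G).natDegree + (EuclideanDomain.divRadical G).natDegree := by
    rw [← natDegree_mul radical_ne_zero (EuclideanDomain.divRadical_ne_zero hG₀),
      EuclideanDomain.radical_mul_divRadical]
  have hpow : n * U.natDegree ≤ max G.natDegree A.natDegree := by
    rw [← natDegree_pow, ← sub_add_cancel (U ^ n) A]
    exact natDegree_add_le G A
  omega

theorem PreservesPrimeCongruences.exists_card_mul_le_natDegree {E : F[X] → F[X]}
    (hE : PreservesPrimeCongruences E) (U : F[X]) {s : Finset F[X]} (hs : ∀ A ∈ s, E A = 0) :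
    ∃ K : ℕ, ∀ n : ℕ, (∀ A ∈ s, reducedWronskian U n A ≠ 0) → E (U ^ n) ≠ 0 →
      s.card * (n * U.natDegree) ≤ (E (U ^ n)).natDegree + K := by
  classical
  obtain ⟨c, hc, hdvd⟩ := exists_forall_prod_dvd_mul s
  refine ⟨c.natDegree + ∑ A ∈ s, (U.natDegree + 2 * A.natDegree), fun n hW hEn => ?_⟩
  have hprod : ∏ A ∈ s, radical (U ^ n - A) ∣ c * E (U ^ n) := by
    refine hdvd (U ^ n) _ (fun A => radical (U ^ n - A)) (fun _ _ => radical_dvd_self) ?_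
    intro A hA
    simpa only [hs A hA, sub_zero] using hE.radical_sub_dvd_sub (U ^ n) A
  calc s.card * (n * U.natDegree)
      = ∑ _ ∈ s, n * U.natDegree := by rw [Finset.sum_const, smul_eq_mul]
    _ ≤ ∑ A ∈ s, ((radical (U ^ n - A)).natDegree + (U.natDegree + 2 * A.natDegree)) :=
      Finset.sum_le_sum fun A hA => natDegree_pow_le_natDegree_radical_sub (hW A hA)
    _ = (∏ A ∈ s, radical (U ^ n - A)).natDegree + ∑ A ∈ s, (U.natDegree + 2 * A.natDegree) := by
      rw [Finset.sum_add_distrib, natDegree_prod _ _ fun _ _ => radical_ne_zero]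
    _ ≤ (c * E (U ^ n)).natDegree + ∑ A ∈ s, (U.natDegree + 2 * A.natDegree) := by
      gcongr
      exact natDegree_le_of_dvd hprod (mul_ne_zero hc hEn)
    _ = (E (U ^ n)).natDegree + (c.natDegree + ∑ A ∈ s, (U.natDegree + 2 * A.natDegree)) := by
      rw [natDegree_mul hc hEn]
      ring

theorem PreservesPrimeCongruences.eq_zero_of_frequently_reducedWronskian_ne_zero {E : F[X] → F[X]}
    (hE : PreservesPrimeCongruences E) {U : F[X]} (hU : 0 < U.natDegree) {A : F[X]}
    (h : ∃ᶠ n in atTop, E (U ^ n) = 0 ∧ reducedWronskian U n A ≠ 0) : E A = 0 := by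
  classical
  by_contra hEA
  obtain ⟨n, ⟨hEn, hW⟩, hn⟩ := (h.and_eventually
    (eventually_gt_atTop ((E A).natDegree + (U.natDegree + 2 * A.natDegree)))).exists
  have hdvd : radical (U ^ n - A) ∣ E A := by
    simpa only [hEn, zero_sub, dvd_neg] using hE.radical_sub_dvd_sub (U ^ n) A
  have hle := natDegree_le_of_dvd hdvd hEA
  have hpow := natDegree_pow_le_natDegree_radical_sub hW
  have hn' := Nat.le_mul_of_pos_right n hU
  omega

theorem eq_zero_of_forall_irreducible_dvd {W : F[X]} (h : ∀ P, Irreducible P → P ∣ W) : W = 0 := by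
  by_contra hW
  have hdeg : 0 < (X * W + C 1).natDegree := by
    rw [natDegree_add_C, natDegree_X_mul hW]
    exact Nat.succ_pos _
  obtain ⟨P, hP, hdvd⟩ := exists_irreducible_of_natDegree_pos hdeg
  have hone : P ∣ C 1 := (dvd_add_right ((h P hP).mul_left X)).mp hdvd
  exact hP.not_isUnit (isUnit_of_dvd_one (by rwa [C_1] at hone))

theorem PreservesPrimeCongruences.eq_zero_of_frequently_pow {E : F[X] → F[X]}
    (hE : PreservesPrimeCongruences E) {U : F[X]} (hU : 0 < U.natDegree)
    (h : ∃ᶠ n in atTop, E (U ^ n) = 0) (A : F[X]) : E A = 0 := by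
  refine eq_zero_of_forall_irreducible_dvd fun P hP => ?_
  have hfreq : ∃ᶠ n in atTop, ∃ B ∈ ({A, A + P, A + X * P} : Set F[X]),
      E (U ^ n) = 0 ∧ reducedWronskian U n B ≠ 0 := h.mono fun n hn => by
    simpa only [hn, true_and] using
      exists_mem_reducedWronskian_ne_zero (ne_zero_of_natDegree_gt hU) hP.ne_zero n A
  obtain ⟨B, hB, hfreqB⟩ : ∃ B, P ∣ A - B ∧
      ∃ᶠ n in atTop, E (U ^ n) = 0 ∧ reducedWronskian U n B ≠ 0 := by
    simp only [Set.mem_insert_iff, Set.mem_singleton_iff, exists_eq_or_imp, exists_eq_left,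
      frequently_or_distrib] at hfreq
    rcases hfreq with h | h | h
    exacts [⟨_, by simp, h⟩, ⟨_, by simp, h⟩, ⟨_, by simp, h⟩]
  have hEB := hE.eq_zero_of_frequently_reducedWronskian_ne_zero hU hfreqB
  simpa only [hEB, sub_zero] using hE hP hB

end Radical

section EvalAsymptotics

variable {A ι : Type*} [CommRing A] [IsDomain A] {l : Filter ι} {V : ι → A[X]}

theorem eventually_degree_eval_lt_degree_pow (hV : Tendsto (fun i => (V i).natDegree) l atTop)
    {T : A[X][X]} {m : ℕ} (hT : T.degree < m) :
    ∀ᶠ i in l, (T.eval (V i)).degree < (V i ^ m).degree := by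
  filter_upwards [hV.eventually_gt_atTop (T.support.sup fun k => (T.coeff k).natDegree)] with i hi
  have hVm : V i ^ m ≠ 0 := pow_ne_zero m (ne_zero_of_natDegree_gt hi)
  rw [eval_eq_sum]
  refine (degree_sum_le _ _).trans_lt ((Finset.sup_lt_iff (bot_lt_iff_ne_bot.mpr
    (degree_ne_bot.mpr hVm))).mpr fun k hk => degree_lt_degree ?_)
  have hkm : k + 1 ≤ m := by
    exact_mod_cast (le_degree_of_mem_supp k hk).trans_lt hT
  have hcoeff : (T.coeff k).natDegree < (V i).natDegree :=
    (Finset.le_sup (f := fun k => (T.coeff k).natDegree) hk).trans_lt hi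
  calc (T.coeff k * V i ^ k).natDegree
      ≤ (T.coeff k).natDegree + k * (V i).natDegree := by
        simpa only [natDegree_pow] using natDegree_mul_le (p := T.coeff k) (q := V i ^ k)
    _ < (V i).natDegree + k * (V i).natDegree := by gcongr
    _ = (k + 1) * (V i).natDegree := by ring
    _ ≤ m * (V i).natDegree := by gcongr
    _ = (V i ^ m).natDegree := (natDegree_pow _ _).symm

theorem eventually_degree_eval_lt_degree_eval (hV : Tendsto (fun i => (V i).natDegree) l atTop)
    {S T : A[X][X]} (hT : T.degree < S.degree) :
    ∀ᶠ i in l, (T.eval (V i)).degree < (S.eval (V i)).degree := by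
  have hS : S ≠ 0 := ne_zero_of_degree_gt hT
  have hdeg : S.degree = S.natDegree := degree_eq_natDegree hS
  filter_upwards [eventually_degree_eval_lt_degree_pow hV (hT.trans_eq hdeg),
    eventually_degree_eval_lt_degree_pow hV ((degree_eraseLead_lt hS).trans_eq hdeg)] with i hTi hSi
  have hlead : (V i ^ S.natDegree).degree ≤ (S.leadingCoeff * V i ^ S.natDegree).degree := by
    rw [mul_comm]
    exact degree_le_mul_left _ (leadingCoeff_ne_zero.mpr hS)
  have heval : S.eval (V i) =
      S.eraseLead.eval (V i) + S.leadingCoeff * V i ^ S.natDegree := by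
    conv_lhs => rw [← S.eraseLead_add_C_mul_X_pow]
    simp only [eval_add, eval_mul, eval_C, eval_pow, eval_X]
  rw [heval, degree_add_eq_right_of_degree_lt (hSi.trans_le hlead)]
  exact hTi.trans_le hlead

theorem eventually_eval_ne_zero (hV : Tendsto (fun i => (V i).natDegree) l atTop) {T : A[X][X]}
    (hT : T ≠ 0) : ∀ᶠ i in l, T.eval (V i) ≠ 0 := by
  have hdeg : (0 : A[X][X]).degree < T.degree := by
    simpa only [degree_zero, bot_lt_iff_ne_bot] using degree_ne_bot.mpr hT
  exact (eventually_degree_eval_lt_degree_eval hV hdeg).mono fun i hi => ne_zero_of_degree_gt hi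

theorem eventually_natDegree_eval_add_eval_mul_le
    (hV : Tendsto (fun i => (V i).natDegree) l atTop) {R S : A[X][X]} {m : ℕ}
    (hR : R.degree < m) (hS : S.degree < m) (y : ι → A[X]) :
    ∀ᶠ i in l, (R.eval (V i) + S.eval (V i) * y i).natDegree ≤
      m * (V i).natDegree + (y i).natDegree := by
  filter_upwards [eventually_degree_eval_lt_degree_pow hV hR,
    eventually_degree_eval_lt_degree_pow hV hS] with i hRi hSi
  have hR' := natDegree_le_natDegree hRi.le
  have hS' := natDegree_le_natDegree hSi.le
  rw [natDegree_pow] at hR' hS'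
  exact natDegree_add_le_of_degree_le (hR'.trans (Nat.le_add_right _ _))
    (natDegree_mul_le.trans (by gcongr))

theorem exists_C_mul_eq_mul_add {B : Type*} [CommRing B] [IsDomain B] (R : B[X]) {S : B[X]}
    (hS : S ≠ 0) :
    ∃ (D : B) (Q T : B[X]), D ≠ 0 ∧ C D * R = Q * S + T ∧ T.degree < S.degree := by
  let φ := algebraMap B (FractionRing B)
  have hφ : Function.Injective φ := IsFractionRing.injective B (FractionRing B)
  have exists_map_eq (p : (FractionRing B)[X]) :
      ∃ (d : B) (p' : B[X]), d ≠ 0 ∧ p'.map φ = C (φ d) * p := by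
    obtain ⟨d, hd, hp⟩ := IsLocalization.integerNormalization_spec (nonZeroDivisors B) p
    exact ⟨d, _, nonZeroDivisors.ne_zero hd, by
      rw [hp, Algebra.smul_def, Polynomial.algebraMap_apply]⟩
  obtain ⟨d, Q, hd, hQ⟩ := exists_map_eq (R.map φ / S.map φ)
  obtain ⟨e, T, he, hT⟩ := exists_map_eq (R.map φ % S.map φ)
  refine ⟨d * e, C e * Q, C d * T, mul_ne_zero hd he, ?_, ?_⟩
  · apply map_injective φ hφ
    simp only [Polynomial.map_add, Polynomial.map_mul, map_C, C_mul]
    rw [hQ, hT]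
    linear_combination -(C (φ d) * C (φ e)) * EuclideanDomain.div_add_mod (R.map φ) (S.map φ)
  · rw [← degree_map_eq_of_injective hφ, ← degree_map_eq_of_injective hφ S, Polynomial.map_mul,
      map_C, hT, degree_C_mul ((map_ne_zero_iff φ hφ).mpr hd),
      degree_C_mul ((map_ne_zero_iff φ hφ).mpr he)]
    exact EuclideanDomain.mod_lt _ ((Polynomial.map_ne_zero_iff hφ).mpr hS)

theorem exists_C_mul_eq_mul_of_frequently_eval_dvd
    (hV : Tendsto (fun i => (V i).natDegree) l atTop) {R S : A[X][X]} (hS : S ≠ 0)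
    (hdvd : ∃ᶠ i in l, S.eval (V i) ∣ R.eval (V i)) :
    ∃ (D : A[X]) (Q : A[X][X]), D ≠ 0 ∧ C D * R = Q * S := by
  obtain ⟨D, Q, T, hD, hdiv, hT⟩ := exists_C_mul_eq_mul_add R hS
  refine ⟨D, Q, hD, ?_⟩
  suffices T = 0 by rw [hdiv, this, add_zero]
  by_contra hT₀
  obtain ⟨i, hi, hdeg, hTi⟩ := (hdvd.and_eventually
    ((eventually_degree_eval_lt_degree_eval hV hT).and (eventually_eval_ne_zero hV hT₀))).exists
  have heval : D * R.eval (V i) = Q.eval (V i) * S.eval (V i) + T.eval (V i) := by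
    simpa only [eval_mul, eval_C, eval_add] using congrArg (eval (V i)) hdiv
  have hST : S.eval (V i) ∣ T.eval (V i) :=
    (dvd_add_right (Dvd.intro_left _ rfl)).mp (heval ▸ hi.mul_left D)
  exact hTi (eq_zero_of_dvd_of_degree_lt hST hdeg)

theorem exists_frequently_mul_eq_eval_of_eval_add_eval_mul
    (hV : Tendsto (fun i => (V i).natDegree) l atTop) {y : ι → A[X]} {R S : A[X][X]}
    (hRS : R ≠ 0 ∨ S ≠ 0) (hy : ∃ᶠ i in l, R.eval (V i) + S.eval (V i) * y i = 0) :
    ∃ (D : A[X]) (g : A[X][X]), D ≠ 0 ∧ ∃ᶠ i in l, D * y i = g.eval (V i) := by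
  have hS : S ≠ 0 := by
    rintro rfl
    obtain ⟨i, hi, hne⟩ := (hy.and_eventually
      (eventually_eval_ne_zero hV (hRS.resolve_right (not_not.mpr rfl)))).exists
    exact hne (by simpa only [eval_zero, zero_mul, add_zero] using hi)
  obtain ⟨D, Q, hD, hQ⟩ := exists_C_mul_eq_mul_of_frequently_eval_dvd hV hS
    (hy.mono fun i hi => (dvd_add_left (Dvd.intro _ rfl)).mp (hi ▸ dvd_zero _))
  refine ⟨D, -Q, hD, (hy.and_eventually (eventually_eval_ne_zero hV hS)).mono ?_⟩
  rintro i ⟨hi, hSi⟩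
  have heval : D * R.eval (V i) = Q.eval (V i) * S.eval (V i) := by
    simpa only [eval_mul, eval_C] using congrArg (eval (V i)) hQ
  apply mul_left_cancel₀ hSi
  rw [eval_neg]
  linear_combination D * hi - heval

end EvalAsymptotics

theorem exists_eval_add_eval_mul_eq_zero {A : Type*} [CommRing A] [Nontrivial A] (s : Finset A)
    (y : A → A) {m n : ℕ} (h : s.card < m + n) :
    ∃ R S : A[X], (R ≠ 0 ∨ S ≠ 0) ∧ R.degree < m ∧ S.degree < n ∧
      ∀ a ∈ s, R.eval a + S.eval a * y a = 0 := by
  let L : (degreeLT A m × degreeLT A n) →ₗ[A] (s → A) := LinearMap.pi fun a =>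
    (leval (a : A)).comp ((degreeLT A m).subtype.comp (LinearMap.fst A _ _)) +
      y a • (leval (a : A)).comp ((degreeLT A n).subtype.comp (LinearMap.snd A _ _))
  have hL : ¬ Function.Injective L := by
    intro hinj
    have hcard := LinearMap.finrank_le_finrank_of_injective hinj
    rw [((degreeLTEquiv A m).prodCongr (degreeLTEquiv A n)).finrank_eq, Module.finrank_prod,
      Module.finrank_fin_fun, Module.finrank_fin_fun, Module.finrank_fintype_fun_eq_card,
      Fintype.card_coe] at hcard
    exact hcard.not_gt h
  rw [← LinearMap.ker_eq_bot, Submodule.eq_bot_iff] at hL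
  push Not at hL
  obtain ⟨⟨R, S⟩, hker, hne⟩ := hL
  refine ⟨R, S, ?_, mem_degreeLT.mp R.2, mem_degreeLT.mp S.2, fun a ha => ?_⟩
  · simpa [← not_and_or] using hne
  · have := congrFun (LinearMap.mem_ker.mp hker) ⟨a, ha⟩
    simpa [L, mul_comm] using this

theorem natCast_expChar_mul_add_one_ne_zero (R : Type*) [NonAssocSemiring R] (q : ℕ) [ExpChar R q]
    (i : ℕ) : ((q * i + 1 : ℕ) : R) ≠ 0 := by
  cases ‹ExpChar R q› with
  | zero => exact Nat.cast_ne_zero.mpr (Nat.succ_ne_zero _)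
  | prime hq =>
    have := CharP.nontrivial_of_char_ne_one (R := R) hq.ne_one
    rw [Nat.cast_add, Nat.cast_mul, CharP.cast_eq_zero R q, zero_mul, zero_add, Nat.cast_one]
    exact one_ne_zero

theorem frequently_natCast_expChar_mul_ne (R : Type*) [NonAssocRing R] (q : ℕ) [ExpChar R q]
    (N : ℕ) : ∃ᶠ n : ℕ in atTop, ∀ k < N, ((q * k : ℕ) : R) ≠ n := by
  refine frequently_atTop.mpr fun M => ⟨q * (M + N) + 1, ?_, fun k hk h => ?_⟩
  · calc M ≤ M + N := Nat.le_add_right M N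
      _ ≤ q * (M + N) := Nat.le_mul_of_pos_left _ (expChar_pos R q)
      _ ≤ q * (M + N) + 1 := Nat.le_succ _
  · apply natCast_expChar_mul_add_one_ne_zero R q (M + N - k)
    have hsplit : q * (M + N) + 1 = q * k + (q * (M + N - k) + 1) := by
      rw [← add_assoc, ← mul_add, Nat.add_sub_cancel' (by omega)]
    rwa [hsplit, Nat.cast_add (q * k), left_eq_add] at h

section PowerDegrees

variable {R : Type*} [Semiring R] {U : R[X]}

theorem natDegree_pos_of_derivative_ne_zero (hU : derivative U ≠ 0) : 0 < U.natDegree :=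
  Nat.pos_of_ne_zero fun h => hU (derivative_of_natDegree_zero h)

variable [NoZeroDivisors R]

theorem tendsto_natDegree_pow_atTop (hU : 0 < U.natDegree) :
    Tendsto (fun n => (U ^ n).natDegree) atTop atTop := by
  simpa only [natDegree_pow, id] using tendsto_id.atTop_mul_const' hU

theorem pow_injective_of_natDegree_pos (hU : 0 < U.natDegree) :
    Function.Injective (U ^ · : ℕ → R[X]) := fun m n h => by
  simpa only [natDegree_pow, mul_left_inj' hU.ne'] using congrArg natDegree h

end PowerDegrees

theorem PreservesPrimeCongruences.exists_frequently_eval_add_eval_mul_eq_zero {F : Type*}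
    [Field F] {f : F[X] → F[X]} (hf : PreservesPrimeCongruences f) {U : F[X]}
    (hU : derivative U ≠ 0) {c d : ℕ} (hlin : ∀ n : ℕ, (f (U ^ n)).natDegree ≤ c * n + d) :
    ∃ R S : F[X][X], (R ≠ 0 ∨ S ≠ 0) ∧
      ∃ᶠ n in atTop, R.eval (U ^ n) + S.eval (U ^ n) * f (U ^ n) = 0 := by
  classical
  have hu : 0 < U.natDegree := natDegree_pos_of_derivative_ne_zero hU
  let q := ringExpChar F
  let s : Finset F[X] := (Finset.range (2 * c + 3)).image fun k => U ^ (q * k)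
  have hs : s.card = 2 * c + 3 :=
    (Finset.card_image_of_injective _ ((pow_injective_of_natDegree_pos hu).comp
      (mul_right_injective₀ (expChar_pos F q).ne'))).trans (Finset.card_range _)
  obtain ⟨R, S, hRS, hR, hS, hzero⟩ :=
    exists_eval_add_eval_mul_eq_zero s f (m := c + 2) (n := c + 2) (by omega)
  obtain ⟨K, hK⟩ := (hf.eval_add_eval_mul R S).exists_card_mul_le_natDegree U hzero
  refine ⟨R, S, hRS, ((frequently_natCast_expChar_mul_ne F q (2 * c + 3)).and_eventually
    ((eventually_natDegree_eval_add_eval_mul_le (tendsto_natDegree_pow_atTop hu) hR hS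
      fun n => f (U ^ n)).and (eventually_gt_atTop (d + K)))).mono ?_⟩
  rintro n ⟨hn, hupper, hnd⟩
  by_contra hE
  have hW : ∀ A ∈ s, reducedWronskian U n A ≠ 0 := by
    intro A hA
    obtain ⟨k, hk, rfl⟩ := Finset.mem_image.mp hA
    exact reducedWronskian_pow_ne_zero hU (hn k (Finset.mem_range.mp hk))
  have hlower := hK n hW hE
  rw [hs] at hlower
  rw [natDegree_pow] at hupper
  have hgap : (c + 1) * (n * U.natDegree) ≤ c * n + d + K := by
    have := hlin n
    linarith
  have hn_le : n ≤ n * U.natDegree := Nat.le_mul_of_pos_right n hu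
  nlinarith

theorem exists_eval_algebraMap_eq_of_mul_eq_eval {A K : Type*} [CommRing A] [Field K] [Algebra A K]
    [FaithfulSMul A K] {f : A → A} {D : A} {g : A[X]} (hD : D ≠ 0)
    (h : ∀ a, D * f a = g.eval a) :
    ∃ G : K[X], ∀ a, G.eval (algebraMap A K a) = algebraMap A K (f a) := by
  have hD' : algebraMap A K D ≠ 0 := by simpa using hD
  refine ⟨C (algebraMap A K D)⁻¹ * g.map (algebraMap A K), fun a => ?_⟩
  rw [eval_mul, eval_C, eval_map_algebraMap, aeval_algebraMap_apply, coe_aeval_eq_eval, ← h,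
    map_mul, inv_mul_cancel_left₀ hD']

theorem ruzsa_polynomial_under_linear_bound_general {F : Type*} [Field F]
    (f : F[X] → F[X])
    (hcong : ∀ A B P : F[X], Irreducible P → P ∣ f (A + B * P) - f A)
    (U : F[X]) (hU : Polynomial.derivative U ≠ 0)
    (C₅ C₆ : ℕ)
    (hlin : ∀ n : ℕ, (f (U ^ n)).natDegree ≤ C₅ * n + C₆) :
    ∃ G : Polynomial (RatFunc F), ∀ A : F[X],
      Polynomial.eval (algebraMap F[X] (RatFunc F) A) G = algebraMap F[X] (RatFunc F) (f A) := by
  have hf := preservesPrimeCongruences_of_dvd_add_mul hcong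
  have hu := natDegree_pos_of_derivative_ne_zero hU
  obtain ⟨R, S, hRS, hfreq⟩ := hf.exists_frequently_eval_add_eval_mul_eq_zero hU hlin
  obtain ⟨D, g, hD, hDg⟩ := exists_frequently_mul_eq_eval_of_eval_add_eval_mul
    (tendsto_natDegree_pow_atTop hu) hRS hfreq
  have hfg : ∀ A, D * f A = g.eval A := by
    intro A
    have hfreq₀ : ∃ᶠ n in atTop, (-g).eval (U ^ n) + (C D).eval (U ^ n) * f (U ^ n) = 0 :=
      hDg.mono fun n hn => by rw [eval_neg, eval_C, hn, neg_add_cancel]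
    have hA := (hf.eval_add_eval_mul (-g) (C D)).eq_zero_of_frequently_pow hu hfreq₀ A
    rwa [eval_neg, eval_C, neg_add_eq_zero, eq_comm] at hA
  exact exists_eval_algebraMap_eq_of_mul_eq_eval hD hfg

/-- If `f : 𝒜 → 𝒜` satisfies `f(A + B·P) ≡ f(A) mod P` for all `A, B` and irreducible `P`,
and there are `U ∈ 𝒜` with `U' ≠ 0` and positive integers `C₅, C₆` with
`deg(f(Uⁿ)) ≤ C₅ n + C₆` for every `n ∈ ℕ₀`, then `f` is a polynomial map. -/
theorem ruzsa_polynomial_under_linear_bound {F : Type*} [Field F] [Fintype F]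
    (f : F[X] → F[X])
    (hcong : ∀ A B P : F[X], Irreducible P → P ∣ f (A + B * P) - f A)
    (U : F[X]) (hU : Polynomial.derivative U ≠ 0)
    (C₅ C₆ : ℕ) (hC₅ : 0 < C₅) (hC₆ : 0 < C₆)
    (hlin : ∀ n : ℕ, (f (U ^ n)).natDegree ≤ C₅ * n + C₆) :
    ∃ G : Polynomial (RatFunc F), ∀ A : F[X],
      Polynomial.eval (algebraMap F[X] (RatFunc F) A) G = algebraMap F[X] (RatFunc F) (f A) := by
  exact ruzsa_polynomial_under_linear_bound_general f hcong U hU C₅ C₆ hlin
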